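/- Let C ≥ 0 be a real number and let f : S¹ → ℝ satisfy: (A) f(x) + f(−x) = πC for all x ∈ S¹; (B) f is Lipschitz continuous, left-differentiable at every point of S¹, and ‖∂₋f‖_TV(S¹) < ∞; and suppose moreover ‖∂₋f‖_TV(S¹) ≤ 4C. Then f is representable by a non-negative finite Borel measure on S¹ with total mass C, i.e., there exists a Borel measure ν : B(S¹) → [0, ∞) with ν(S¹) = C such that f(x) = ∫_{S¹} d_{S¹}(x,y) ν(dy) for all x ∈ S¹. -/

import Mathlib

open MeasureTheory Real Filter Set Complex
open scoped ENNReal NNReal Classical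

noncomputable section

instance : MeasurableSpace Circle := borel Circle
instance : BorelSpace Circle := ⟨rfl⟩

namespace CirclePaper

/-- The spherical (arc-length) distance on the unit circle `S¹ ⊆ ℝ² ≃ ℂ`:
`d_{S¹}(x,y) = arccos ⟨x,y⟩ = arccos (Re (x * conj y))`. -/
def dS1 (x y : Circle) : ℝ := Real.arccos (((x : ℂ) * (starRingEnd ℂ) (y : ℂ)).re)

/-- The antipodal map `T x = -x` (multiplication by `exp(iπ) = -1`). -/
def antipode (x : Circle) : Circle := Circle.exp π * x

/-- Integral of a function against a signed measure (via the Jordan decomposition). -/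
def sInt (l : SignedMeasure Circle) (f : Circle → ℝ) : ℝ :=
  (∫ y, f y ∂l.toJordanDecomposition.posPart) - (∫ y, f y ∂l.toJordanDecomposition.negPart)

/-- `f_λ(x) = ∫_{S¹} d_{S¹}(x,y) λ(dy)`. -/
def fRep (l : SignedMeasure Circle) (x : Circle) : ℝ := sInt l (fun y => dS1 x y)

/-- `f : S¹ → ℝ` has left derivative `L` at `x` w.r.t. the covering `q(t) = exp(it)`,
i.e. `(f(x +_q t) - f(x))/t → L` as `t → 0⁻`. -/
def HasLeftDerivCircleAt (f : Circle → ℝ) (L : ℝ) (x : Circle) : Prop :=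
  Filter.Tendsto (fun t : ℝ => (f (Circle.exp t * x) - f x) / t)
    (nhdsWithin 0 (Set.Iio 0)) (nhds L)

/-- `h : ℝ → ℝ` has left derivative `L` at `t`: `(h(t+s) - h(t))/s → L` as `s → 0⁻`. -/
def HasLeftDerivAtR (h : ℝ → ℝ) (L : ℝ) (t : ℝ) : Prop :=
  Filter.Tendsto (fun s : ℝ => (h (t + s) - h t) / s)
    (nhdsWithin 0 (Set.Iio 0)) (nhds L)

/-- The total variation `‖g‖_{TV(S¹)}` of `g : S¹ → ℝ`: the supremum of
`Σ |g(q(t_i)) - g(q(t_{i+1}))|` over partitions `0 = t_0 ≤ … ≤ t_{n+1} = 2π`. -/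
def circleTV (g : Circle → ℝ) : ℝ≥0∞ := eVariationOn (g ∘ Circle.exp) (Set.Icc 0 (2 * π))

/-- `f` is Lipschitz continuous with respect to the spherical distance. -/
def LipschitzCircle (f : Circle → ℝ) : Prop := ∃ K : ℝ, ∀ x y, |f x - f y| ≤ K * dS1 x y

/-- The normalized Hausdorff 1-measure on `S¹`, i.e. the rotation-invariant Borel
probability measure (the pushforward of normalized Lebesgue measure on `[0, 2π)`). -/
def hausOne : Measure Circle :=
  (ENNReal.ofReal (2 * π))⁻¹ • Measure.map Circle.exp (volume.restrict (Set.Ico 0 (2 * π)))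

instance : IsFiniteMeasure hausOne := by
  constructor
  have h1 : (Measure.map Circle.exp (volume.restrict (Set.Ico 0 (2 * π)))) Set.univ
      = volume (Set.Ico 0 (2 * π)) := by
    rw [Measure.map_apply Circle.exp.continuous.measurable MeasurableSet.univ]
    simp
  simp only [hausOne, Measure.smul_apply, smul_eq_mul, h1, Real.volume_Ico]
  refine ENNReal.mul_lt_top ?_ ?_
  · exact ENNReal.inv_lt_top.mpr (ENNReal.ofReal_pos.mpr (by positivity))
  · exact ENNReal.ofReal_lt_top

/-- The half-open arc `[x, T(x)) = {x +_q t : t ∈ [0, π)}` of length `π` starting at `x`. -/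
def halfArc (x : Circle) : Set Circle := (fun t : ℝ => Circle.exp t * x) '' Set.Ico 0 π

/-- A Borel measure on the circle, regarded as a signed measure
(defined to be `0` if the measure is not finite). -/
def msigned (μ : Measure Circle) : SignedMeasure Circle :=
  if h : IsFiniteMeasure μ then @Measure.toSignedMeasure _ _ μ h else 0

/-! Crofton's formula on the circle: `dS1 (exp t) y` is the Lebesgue measure of the `u ∈ (t, t + π]`
for which the half-arc `[exp u, -exp u)` contains `y`. By Fubini the potential of `ν` at `exp t` is
`∫ u in t..t + π, ν (halfArc (exp u))`. On the other hand, integrating the left derivative `f'` over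
`[t, t + π]` gives `f (-exp t) - f (exp t) = π C - 2 f (exp t)`. Hence `ν` represents `f` as soon as
`f' (exp u) = C - 2 ν (halfArc (exp u))` for almost every `u`.

Such a `ν` is the image under `exp` of the Stieltjes measure of a nondecreasing `w` on `[0, 2π]`
with `w (t + π) - w t = (C - f' (exp t)) / 2`. Since `g = f' ∘ exp` is antiperiodic, its variation
`V` increases by the constant `M = ‖g‖_TV / 2 ≤ 2 C` over every half period, so that
`w t = (V t + g t) / 4 + (C / 2 - M / 4) t / π` has the required increments; the bound on the total
variation is what makes the linear term nondecreasing. -/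

open scoped Topology

theorem integral_eq_sub_of_hasDeriv_left {E : Type*} [NormedAddCommGroup E] [NormedSpace ℝ E]
    [CompleteSpace E] {F g : ℝ → E} {a b : ℝ} (hab : a ≤ b) (hF : ContinuousOn F (Icc a b))
    (hderiv : ∀ x ∈ Ioo a b, HasDerivWithinAt F (g x) (Iio x) x)
    (hint : IntervalIntegrable g volume a b) : ∫ x in a..b, g x = F b - F a := by
  have hderiv_neg : ∀ x ∈ Ioo (-b) (-a),
      HasDerivWithinAt (fun t => F (-t)) (-g (-x)) (Ioi x) x := fun x hx => by
    have hmaps : MapsTo Neg.neg (Ioi x) (Iio (-x)) := fun y (hy : x < y) => neg_lt_neg hy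
    simpa only [neg_smul, one_smul, Function.comp_def] using
      (hderiv (-x) ⟨by linarith [hx.2], by linarith [hx.1]⟩).scomp x
        (hasDerivAt_neg x).hasDerivWithinAt hmaps
  have hcont : ContinuousOn (fun t => F (-t)) (Icc (-b) (-a)) :=
    hF.comp continuousOn_neg fun x hx => ⟨by linarith [hx.2], by linarith [hx.1]⟩
  have hint_neg : IntervalIntegrable (fun t => -g (-t)) volume (-b) (-a) := by
    simpa only [zero_sub, Pi.neg_def] using (hint.symm.comp_sub_left 0).neg
  have key := intervalIntegral.integral_eq_sub_of_hasDeriv_right_of_le (neg_le_neg hab) hcont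
    hderiv_neg hint_neg
  rw [intervalIntegral.integral_neg, intervalIntegral.integral_comp_neg (f := g)] at key
  simpa only [neg_neg, neg_sub] using congrArg Neg.neg key

theorem HasLeftDerivAtR.hasDerivWithinAt {h : ℝ → ℝ} {L t : ℝ} (hL : HasLeftDerivAtR h L t) :
    HasDerivWithinAt h L (Iio t) t := by
  rw [hasDerivWithinAt_iff_tendsto_slope' self_notMem_Iio]
  have hshift : Tendsto (fun y => y - t) (𝓝[<] t) (𝓝[<] 0) := by
    have hcont : ContinuousWithinAt (fun y => y - t) (Iio t) t := by fun_prop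
    simpa only [sub_self] using
      hcont.tendsto_nhdsWithin (t := Iio (t - t)) fun y hy => sub_lt_sub_right hy t
  refine (hL.comp hshift).congr fun y => ?_
  rw [Function.comp_apply, add_sub_cancel, slope_def_field]

theorem ae_of_periodic {p : ℝ → Prop} {c : ℝ} (hc : 0 < c) (hp : Function.Periodic p c)
    (a : ℝ) (h : ∀ᵐ u, u ∈ Ioc a (a + c) → p u) : ∀ᵐ u, p u := by
  have : VAddInvariantMeasure (AddSubgroup.zmultiples c) ℝ volume :=
    ⟨fun d s _ => measure_preimage_add _ _ _⟩
  refine (isAddFundamentalDomain_Ioc hc a).measure_zero_of_invariant _ (fun d => ?_) ?_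
  · ext u
    rw [mem_vadd_set_iff_neg_vadd_mem]
    exact not_congr (iff_of_eq (hp.map_vadd_zmultiples (-d) u))
  · refine measure_mono_null (fun u hu => ?_) h
    exact fun hpu => hu.1 (hpu hu.2)

theorem eVariationOn_neg {α E : Type*} [LinearOrder α] [SeminormedAddCommGroup E] (g : α → E)
    (s : Set α) : eVariationOn (-g) s = eVariationOn g s := by
  simp only [eVariationOn, Pi.neg_apply, edist_neg_neg]

section Antiperiodic

variable {α E : Type*} [AddCommGroup α] [LinearOrder α] [IsOrderedAddMonoid α]
  [SeminormedAddCommGroup E] {g : α → E} {c : α}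

theorem eVariationOn_Icc_add_of_antiperiodic (hg : Function.Antiperiodic g c) (a b : α) :
    eVariationOn g (Icc (a + c) (b + c)) = eVariationOn g (Icc a b) := by
  rw [← image_add_const_Icc,
    ← eVariationOn.comp_eq_of_monotoneOn g (· + c) (fun _ _ _ _ h => add_le_add_left h c),
    ← eVariationOn_neg g]
  exact congrArg (eVariationOn · _) (funext hg)

theorem eVariationOn_half_period_eq (hg : Function.Antiperiodic g c) {a u : α}
    (hu : u ∈ Icc a (a + c)) :
    eVariationOn g (Icc u (u + c)) = eVariationOn g (Icc a (a + c)) := by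
  have split : ∀ {p q r : α}, p ≤ q → q ≤ r →
      eVariationOn g (Icc p q) + eVariationOn g (Icc q r) = eVariationOn g (Icc p r) :=
    fun hpq hqr => by
      simpa only [univ_inter] using eVariationOn.Icc_add_Icc g hpq hqr (mem_univ _)
  rw [← split hu.2 (add_le_add_left hu.1 c), ← split hu.1 hu.2,
    eVariationOn_Icc_add_of_antiperiodic hg, add_comm]

theorem eVariationOn_two_half_periods_eq (hg : Function.Antiperiodic g c) (hc : 0 ≤ c) (a : α) :
    eVariationOn g (Icc a (a + c + c)) = 2 * eVariationOn g (Icc a (a + c)) := by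
  have hsplit := eVariationOn.Icc_add_Icc g (le_add_of_nonneg_right hc)
    (le_add_of_nonneg_right hc) (mem_univ (a + c))
  simp only [univ_inter] at hsplit
  rw [← hsplit, eVariationOn_Icc_add_of_antiperiodic hg, two_mul]

end Antiperiodic

theorem exists_monotoneOn_sub_eq_of_antiperiodic {g : ℝ → ℝ} {c C : ℝ} (hc : 0 < c)
    (hC : 0 ≤ C) (hg : Function.Antiperiodic g c)
    (hvar : eVariationOn g (Icc 0 (2 * c)) ≤ ENNReal.ofReal (4 * C)) :
    ∃ w : ℝ → ℝ, MonotoneOn w (Icc 0 (2 * c)) ∧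
      ∀ t ∈ Icc 0 c, w (t + c) - w t = (C - g t) / 2 := by
  set I := Icc 0 (2 * c)
  set V := variationOnFromTo g I 0
  set M := (eVariationOn g (Icc 0 c)).toReal
  have hM : M ≤ 2 * C := by
    have hdouble := eVariationOn_two_half_periods_eq hg hc.le 0
    rw [zero_add, ← two_mul c] at hdouble
    have := ENNReal.toReal_mono ENNReal.ofReal_ne_top (hdouble ▸ hvar)
    rw [ENNReal.toReal_mul, ENNReal.toReal_ofReal (by positivity), ENNReal.toReal_ofNat] at this
    linarith
  have hbv : LocallyBoundedVariationOn g I :=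
    BoundedVariationOn.locallyBoundedVariationOn (ne_top_of_le_ne_top ENNReal.ofReal_ne_top hvar)
  have h0 : (0 : ℝ) ∈ I := ⟨le_rfl, by positivity⟩
  have hV : ∀ t ∈ Icc 0 c, V (t + c) - V t = M := fun t ht => by
    have ht' : t ∈ I := ⟨ht.1, by linarith [ht.2]⟩
    have htc : t + c ∈ I := ⟨by linarith [ht.1], by linarith [ht.2]⟩
    rw [variationOnFromTo.sub_right hbv h0 htc ht', variationOnFromTo.eq_of_le _ _ (by linarith),
      inter_eq_self_of_subset_right (Icc_subset_Icc ht'.1 htc.2),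
      eVariationOn_half_period_eq hg (a := 0) (by rwa [zero_add]), zero_add]
  have hslope : 0 ≤ (C / 2 - M / 4) / c := div_nonneg (by linarith) hc.le
  refine ⟨fun t => (V t + g t) / 4 + (C / 2 - M / 4) / c * t, fun s hs t ht hst => ?_,
    fun t ht => ?_⟩
  · have hVg : V s + g s ≤ V t + g t :=
      variationOnFromTo.add_self_monotoneOn hbv h0 hs ht hst
    have := mul_le_mul_of_nonneg_left hst hslope
    dsimp only
    linarith
  · have hlinear : (C / 2 - M / 4) / c * (t + c) = (C / 2 - M / 4) / c * t + (C / 2 - M / 4) := by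
      field_simp
    dsimp only
    rw [hg t, hlinear]
    linarith [hV t ht]

theorem leftLim_stieltjesFunction {G : ℝ → ℝ} (hG : Monotone G) (x : ℝ) :
    Function.leftLim hG.stieltjesFunction x = Function.leftLim G x :=
  leftLim_rightLim (hG.tendsto_leftLim x)

theorem exists_measure_Ico_of_monotoneOn {w : ℝ → ℝ} {a b : ℝ} (hab : a ≤ b)
    (hw : MonotoneOn w (Icc a b)) :
    ∃ μ : Measure ℝ, μ univ = ENNReal.ofReal (w b - w a) ∧ μ (Icc a b)ᶜ = 0 ∧
      ∃ S : Set ℝ, S.Countable ∧ ∀ c ∈ Ioo a b \ S, ∀ d ∈ Ioo a b \ S,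
        μ (Ico c d) = ENNReal.ofReal (w d - w c) := by
  set G := IccExtend hab ((Icc a b).domRestrict w)
  have hG : Monotone G := Monotone.IccExtend hab fun x y hxy => hw x.2 y.2 hxy
  have hGw : EqOn G w (Icc a b) := fun x hx => IccExtend_of_mem _ _ hx
  have hleft : Function.leftLim G a = w a := by
    refine leftLim_eq_of_tendsto (tendsto_const_nhds.congr' ?_)
    filter_upwards [self_mem_nhdsWithin] with x hx
    exact (IccExtend_of_le_left hab ((Icc a b).domRestrict w) (le_of_lt hx)).symm
  have hright : hG.stieltjesFunction b = w b := by
    refine rightLim_eq_of_tendsto (tendsto_const_nhds.congr' ?_)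
    filter_upwards [self_mem_nhdsWithin] with x hx
    exact (IccExtend_of_right_le hab ((Icc a b).domRestrict w) (le_of_lt hx)).symm
  refine ⟨hG.stieltjesFunction.measure.restrict (Icc a b), ?_, ?_,
    {x | ¬ContinuousAt G x}, hG.countable_not_continuousAt, fun c hc d hd => ?_⟩
  · rw [Measure.restrict_apply_univ, StieltjesFunction.measure_Icc, leftLim_stieltjesFunction hG,
      hleft, hright]
  · rw [Measure.restrict_apply measurableSet_Icc.compl, compl_inter_self, measure_empty]
  · have hlim : ∀ x ∈ Ioo a b \ {x | ¬ContinuousAt G x}, Function.leftLim G x = w x :=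
      fun x hx => (not_not.1 hx.2).continuousWithinAt.leftLim_eq.trans
        (hGw (Ioo_subset_Icc_self hx.1))
    rw [Measure.restrict_apply measurableSet_Ico,
      inter_eq_self_of_subset_left
        (Ico_subset_Icc_self.trans (Icc_subset_Icc hc.1.1.le hd.1.2.le)),
      StieltjesFunction.measure_Ico, leftLim_stieltjesFunction hG, leftLim_stieltjesFunction hG,
      hlim c hc, hlim d hd]

theorem exp_add_pi (t : ℝ) : Circle.exp (t + π) = antipode (Circle.exp t) := by
  rw [antipode, add_comm, Circle.exp_add]

theorem exp_mem_halfArc_exp_iff {s u : ℝ} (hlo : u - π ≤ s) (hhi : s < u + 2 * π) :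
    Circle.exp s ∈ halfArc (Circle.exp u) ↔ s ∈ Ico u (u + π) := by
  constructor
  · rintro ⟨r, ⟨hr0, hrπ⟩, hr⟩
    dsimp only at hr
    rw [← Circle.exp_add] at hr
    obtain ⟨m, hm⟩ := Circle.exp_eq_exp.1 hr
    have hm_lt : (m : ℝ) < 1 := lt_of_mul_lt_mul_right (by linarith) two_pi_pos.le
    have hm_gt : (-1 : ℝ) < m := lt_of_mul_lt_mul_right (by linarith) two_pi_pos.le
    have hm0 : m = 0 := by
      have : m < 1 := by exact_mod_cast hm_lt
      have : -1 < m := by exact_mod_cast hm_gt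
      lia
    rw [hm0, Int.cast_zero, zero_mul, add_zero] at hm
    exact ⟨by linarith, by linarith⟩
  · rintro ⟨hus, hsu⟩
    exact ⟨s - u, ⟨by linarith, by linarith⟩, by dsimp only; rw [← Circle.exp_add, sub_add_cancel]⟩

theorem exists_exp_eq_mem_Ico (x : Circle) (u : ℝ) :
    ∃ s ∈ Ico u (u + 2 * π), Circle.exp s = x := by
  obtain ⟨r, rfl⟩ := Circle.exp_surjective x
  obtain ⟨s, hs, hrs⟩ := Circle.periodic_exp.exists_mem_Ico two_pi_pos r u
  exact ⟨s, hs, hrs.symm⟩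

theorem halfArc_antipode (x : Circle) : halfArc (antipode x) = (halfArc x)ᶜ := by
  obtain ⟨u, rfl⟩ := Circle.exp_surjective x
  ext y
  obtain ⟨s, hs, rfl⟩ := exists_exp_eq_mem_Ico y u
  rw [← exp_add_pi, mem_compl_iff, exp_mem_halfArc_exp_iff (by linarith [hs.1])
    (by linarith [hs.2, pi_pos]), exp_mem_halfArc_exp_iff (by linarith [hs.1, pi_pos]) hs.2]
  exact ⟨fun h h' => h'.2.not_ge h.1,
    fun h => ⟨not_lt.1 fun h' => h ⟨hs.1, h'⟩, by linarith [hs.2]⟩⟩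

theorem mem_halfArc_iff {x y : Circle} : y ∈ halfArc x ↔ arg (y / x : Circle) ∈ Ico 0 π := by
  constructor
  · rintro ⟨t, ht, rfl⟩
    dsimp only
    rwa [mul_div_cancel_right, Circle.arg_exp (by linarith [ht.1, pi_pos]) ht.2.le]
  · exact fun h => ⟨_, h, by dsimp only; rw [Circle.exp_arg, div_mul_cancel]⟩

theorem measurableSet_mem_halfArc : MeasurableSet {p : Circle × Circle | p.1 ∈ halfArc p.2} := by
  simp only [mem_halfArc_iff]
  have hdiv : Continuous fun p : Circle × Circle => p.1 / p.2 := by fun_prop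
  exact (measurable_arg.comp (continuous_subtype_val.comp hdiv).measurable) measurableSet_Ico

theorem measurableSet_halfArc (x : Circle) : MeasurableSet (halfArc x) :=
  measurable_prodMk_right measurableSet_mem_halfArc

theorem exists_measure_halfArc_eq_sub {w : ℝ → ℝ} (hw : MonotoneOn w (Icc 0 (2 * π))) :
    ∃ ν : Measure Circle, ν univ = ENNReal.ofReal (w (2 * π) - w 0) ∧
      ∀ᵐ u : ℝ, u ∈ Ioo 0 π →
        ν (halfArc (Circle.exp u)) = ENNReal.ofReal (w (u + π) - w u) := by
  obtain ⟨μ, hμ_univ, hμ_compl, S, hS, hμ_Ico⟩ := exists_measure_Ico_of_monotoneOn two_pi_pos.le hw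
  have hexp : Measurable Circle.exp := Circle.exp.continuous.measurable
  refine ⟨μ.map Circle.exp, by rw [Measure.map_apply hexp .univ, preimage_univ, hμ_univ], ?_⟩
  filter_upwards [hS.ae_notMem volume,
    (hS.preimage (add_left_injective π)).ae_notMem volume] with u hu huπ hu0
  have hu_mem : u ∈ Ioo 0 (2 * π) := ⟨hu0.1, by linarith [hu0.2, pi_pos]⟩
  have huπ_mem : u + π ∈ Ioo 0 (2 * π) := ⟨by linarith [hu0.1, pi_pos], by linarith [hu0.2]⟩
  rw [Measure.map_apply hexp (measurableSet_halfArc _), ← hμ_Ico u ⟨hu_mem, hu⟩ _ ⟨huπ_mem, huπ⟩]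
  refine measure_congr ?_
  filter_upwards [measure_eq_zero_iff_ae_notMem.1 hμ_compl] with s hs
  rw [notMem_compl_iff] at hs
  exact propext (exp_mem_halfArc_exp_iff (by linarith [hs.1, hu0.2]) (by linarith [hs.2, hu0.1]))

theorem exists_measure_halfArc_eq {C : ℝ} (hC : 0 ≤ C) {g : Circle → ℝ}
    (hg : ∀ x, g (antipode x) = -g x) (hvar : circleTV g ≤ ENNReal.ofReal (4 * C)) :
    ∃ ν : Measure Circle, ν univ = ENNReal.ofReal C ∧
      ∀ᵐ u : ℝ, g (Circle.exp u) = C - 2 * ν.real (halfArc (Circle.exp u)) := by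
  have hanti : Function.Antiperiodic (g ∘ Circle.exp) π := fun t => by
    rw [Function.comp_apply, exp_add_pi, hg, Function.comp_apply]
  obtain ⟨w, hw, hw_sub⟩ := exists_monotoneOn_sub_eq_of_antiperiodic pi_pos hC hanti hvar
  obtain ⟨ν, hν_univ, hν⟩ := exists_measure_halfArc_eq_sub hw
  have hw_total : w (2 * π) - w 0 = C := by
    have h_first := hw_sub 0 ⟨le_rfl, pi_pos.le⟩
    have h_second := hw_sub π ⟨pi_pos.le, le_rfl⟩
    rw [← two_mul, hanti.eq] at h_second
    rw [zero_add] at h_first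
    linarith
  rw [hw_total] at hν_univ
  have : IsFiniteMeasure ν := ⟨hν_univ ▸ ENNReal.ofReal_lt_top⟩
  have hν_antipode : ∀ x, ν.real (halfArc (antipode x)) = C - ν.real (halfArc x) := fun x => by
    rw [halfArc_antipode, measureReal_compl (measurableSet_halfArc x), Measure.real, hν_univ,
      ENNReal.toReal_ofReal hC]
  refine ⟨ν, hν_univ, ae_of_periodic pi_pos (fun u => propext ?_) 0 ?_⟩
  · rw [exp_add_pi, hg, hν_antipode]
    constructor <;> intro h <;> linarith
  · filter_upwards [hν, (countable_singleton π).ae_notMem volume] with u hu huπ hu0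
    rw [zero_add] at hu0
    have huI : u ∈ Ioo 0 π := ⟨hu0.1, lt_of_le_of_ne hu0.2 huπ⟩
    have hsub := hw_sub u (Ioo_subset_Icc_self huI)
    have hle := hw ⟨hu0.1.le, by linarith [hu0.2, pi_pos]⟩
      ⟨by linarith [hu0.1, pi_pos], by linarith [hu0.2]⟩ (le_add_of_nonneg_right pi_pos.le : u ≤ _)
    rw [Measure.real, hu huI, ENNReal.toReal_ofReal (sub_nonneg.2 hle), hsub,
      Function.comp_apply]
    ring

theorem dS1_exp (t s : ℝ) : dS1 (Circle.exp t) (Circle.exp s) = Real.arccos (Real.cos (t - s)) := by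
  rw [dS1, ← Circle.coe_inv_eq_conj, ← Circle.coe_mul, ← div_eq_mul_inv, ← Circle.exp_sub,
    Circle.coe_exp, Complex.exp_ofReal_mul_I_re]

theorem dS1_self (x : Circle) : dS1 x x = 0 := by
  obtain ⟨t, rfl⟩ := Circle.exp_surjective x
  rw [dS1_exp, sub_self, Real.cos_zero, Real.arccos_one]

theorem continuous_dS1 (x : Circle) : Continuous (dS1 x) := by
  unfold dS1
  fun_prop

theorem LipschitzCircle.continuous {f : Circle → ℝ} (hf : LipschitzCircle f) : Continuous f := by
  obtain ⟨K, hK⟩ := hf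
  refine continuous_iff_continuousAt.2 fun x => ?_
  have hbound : Tendsto (fun y => K * dS1 x y) (𝓝 x) (𝓝 0) := by
    simpa only [dS1_self, mul_zero] using ((continuous_dS1 x).const_mul K).tendsto x
  refine tendsto_iff_dist_tendsto_zero.2 (squeeze_zero (fun _ => dist_nonneg) (fun y => ?_) hbound)
  rw [dist_comm, Real.dist_eq]
  exact hK x y

theorem dS1_exp_of_mem_Ico {t s : ℝ} (hs : s ∈ Ico t (t + 2 * π)) :
    dS1 (Circle.exp t) (Circle.exp s) = min (s - t) (2 * π - (s - t)) := by
  rw [dS1_exp, ← Real.cos_neg, neg_sub]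
  rcases le_total (s - t) π with h | h
  · rw [Real.arccos_cos (by linarith [hs.1]) h, min_eq_left (by linarith)]
  · rw [← Real.cos_two_pi_sub, Real.arccos_cos (by linarith [hs.2]) (by linarith),
      min_eq_right (by linarith)]

theorem dS1_exp_eq_integral_indicator_halfArc (t : ℝ) (y : Circle) :
    dS1 (Circle.exp t) y = ∫ u in t..t + π, (halfArc (Circle.exp u)).indicator 1 y := by
  obtain ⟨s, hs, rfl⟩ := exists_exp_eq_mem_Ico y t
  have hind : ∀ u ∈ Ioc t (t + π),
      (halfArc (Circle.exp u)).indicator (1 : Circle → ℝ) (Circle.exp s) =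
        (Ioc (s - π) s).indicator 1 u := fun u hu => by
    have hmem : Circle.exp s ∈ halfArc (Circle.exp u) ↔ u ∈ Ioc (s - π) s := by
      rw [exp_mem_halfArc_exp_iff (by linarith [hs.1, hu.2]) (by linarith [hs.2, hu.1]), mem_Ico,
        mem_Ioc, sub_lt_iff_lt_add, and_comm]
    simp only [indicator_apply, hmem, Pi.one_apply]
  rw [intervalIntegral.integral_of_le (le_add_of_nonneg_right pi_pos.le),
    setIntegral_congr_fun measurableSet_Ioc hind, setIntegral_indicator measurableSet_Ioc,
    Ioc_inter_Ioc, dS1_exp_of_mem_Ico hs]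
  simp only [Pi.one_apply, setIntegral_const, smul_eq_mul, mul_one]
  rcases le_total s (t + π) with h | h
  · rw [max_eq_left (by linarith), min_eq_right h, min_eq_left (by linarith),
      Real.volume_real_Ioc_of_le hs.1]
  · rw [max_eq_right (by linarith), min_eq_left h, min_eq_right (by linarith),
      Real.volume_real_Ioc_of_le (by linarith [hs.2])]
    ring

theorem intervalIntegrable_measureReal_halfArc (ν : Measure Circle) [IsFiniteMeasure ν] (a b : ℝ) :
    IntervalIntegrable (fun u => ν.real (halfArc (Circle.exp u))) volume a b := by
  have hmeas : Measurable fun u => ν.real (halfArc (Circle.exp u)) :=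
    ((measurable_measure_prodMk_right measurableSet_mem_halfArc).comp
      Circle.exp.continuous.measurable).ennreal_toReal
  have hbound : ∀ u, ‖ν.real (halfArc (Circle.exp u))‖ ≤ ν.real univ := fun u => by
    rw [Real.norm_of_nonneg measureReal_nonneg]
    exact measureReal_mono (subset_univ _)
  exact (intervalIntegrable_const (c := ν.real univ)).mono_fun' hmeas.aestronglyMeasurable
    (ae_of_all _ hbound)

theorem integral_dS1_exp (ν : Measure Circle) [IsFiniteMeasure ν] (t : ℝ) :
    ∫ y, dS1 (Circle.exp t) y ∂ν = ∫ u in t..t + π, ν.real (halfArc (Circle.exp u)) := by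
  have hmeas : MeasurableSet {p : Circle × ℝ | p.1 ∈ halfArc (Circle.exp p.2)} :=
    (measurable_id.prodMap Circle.exp.continuous.measurable) measurableSet_mem_halfArc
  have hint : Integrable
      (Function.uncurry fun y u => (halfArc (Circle.exp u)).indicator (1 : Circle → ℝ) y)
      (ν.prod (volume.restrict (Ioc t (t + π)))) :=
    (integrable_const 1).indicator hmeas
  simp only [dS1_exp_eq_integral_indicator_halfArc,
    intervalIntegral.integral_of_le (le_add_of_nonneg_right pi_pos.le)]
  rw [integral_integral_swap hint]
  simp only [integral_indicator_one (measurableSet_halfArc _)]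

theorem HasLeftDerivCircleAt.hasLeftDerivAtR {f : Circle → ℝ} {L t : ℝ}
    (hL : HasLeftDerivCircleAt f L (Circle.exp t)) : HasLeftDerivAtR (f ∘ Circle.exp) L t := by
  simpa only [HasLeftDerivAtR, HasLeftDerivCircleAt, Function.comp_apply, add_comm t,
    Circle.exp_add] using hL

theorem hasLeftDerivCircleAt_antipode {f : Circle → ℝ} {L c : ℝ} {x : Circle}
    (hf : ∀ x, f x + f (antipode x) = c) (hL : HasLeftDerivCircleAt f L x) :
    HasLeftDerivCircleAt f (-L) (antipode x) := by
  refine hL.neg.congr fun t => ?_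
  have hcomm : Circle.exp t * antipode x = antipode (Circle.exp t * x) := mul_left_comm _ _ _
  rw [hcomm, ← neg_div]
  congr 1
  linarith [hf x, hf (Circle.exp t * x)]

theorem HasLeftDerivCircleAt.unique {f : Circle → ℝ} {L L' : ℝ} {x : Circle}
    (hL : HasLeftDerivCircleAt f L x) (hL' : HasLeftDerivCircleAt f L' x) : L = L' :=
  tendsto_nhds_unique hL hL'

theorem eq_integral_dS1 {C : ℝ} {f f' : Circle → ℝ} (hcont : Continuous f)
    (hA : ∀ x, f x + f (antipode x) = π * C) (hf' : ∀ x, HasLeftDerivCircleAt f (f' x) x)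
    {ν : Measure Circle} [IsFiniteMeasure ν]
    (hν : ∀ᵐ u : ℝ, f' (Circle.exp u) = C - 2 * ν.real (halfArc (Circle.exp u))) (x : Circle) :
    f x = ∫ y, dS1 x y ∂ν := by
  obtain ⟨t, rfl⟩ := Circle.exp_surjective x
  have hint := intervalIntegrable_measureReal_halfArc ν t (t + π)
  have hint' : IntervalIntegrable (fun u => f' (Circle.exp u)) volume t (t + π) :=
    (intervalIntegrable_const.sub (hint.const_mul 2)).congr_ae
      (ae_restrict_of_ae (hν.mono fun _ => Eq.symm))
  have hleft : ∫ u in t..t + π, f' (Circle.exp u) = π * C - 2 * f (Circle.exp t) := by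
    rw [integral_eq_sub_of_hasDeriv_left (F := f ∘ Circle.exp) (by linarith [pi_pos])
      (hcont.comp Circle.exp.continuous).continuousOn
      (fun u _ => (hf' (Circle.exp u)).hasLeftDerivAtR.hasDerivWithinAt) hint',
      Function.comp_apply, Function.comp_apply, exp_add_pi, ← hA (Circle.exp t)]
    ring
  have hright : ∫ u in t..t + π, f' (Circle.exp u) =
      π * C - 2 * ∫ y, dS1 (Circle.exp t) y ∂ν := by
    rw [intervalIntegral.integral_congr_ae (hν.mono fun _ h _ => h),
      intervalIntegral.integral_sub intervalIntegrable_const (hint.const_mul 2),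
      intervalIntegral.integral_const, intervalIntegral.integral_const_mul, integral_dS1_exp,
      add_sub_cancel_left, smul_eq_mul]
  linarith

theorem stmt14_general (C : ℝ) (hC : 0 ≤ C) (f : Circle → ℝ)
    (hA : ∀ x : Circle, f x + f (antipode x) = π * C) (hcont : Continuous f)
    (f' : Circle → ℝ) (hf' : ∀ x : Circle, HasLeftDerivCircleAt f (f' x) x)
    (hTV4C : circleTV f' ≤ ENNReal.ofReal (4 * C)) :
    ∃ ν : Measure Circle, ν Set.univ = ENNReal.ofReal C ∧
      ∀ x : Circle, f x = ∫ y, dS1 x y ∂ν := by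
  have hodd : ∀ x, f' (antipode x) = -f' x := fun x =>
    (hf' _).unique (hasLeftDerivCircleAt_antipode hA (hf' x))
  obtain ⟨ν, hν_univ, hν⟩ := exists_measure_halfArc_eq hC hodd hTV4C
  have : IsFiniteMeasure ν := ⟨hν_univ ▸ ENNReal.ofReal_lt_top⟩
  exact ⟨ν, hν_univ, eq_integral_dS1 hcont hA hf' hν⟩

/-- If `C ≥ 0` and `f` satisfies (A), (B) and `‖∂₋f‖_{TV(S¹)} ≤ 4C`,
then `f` is representable by a non-negative Borel measure of total mass `C`. -/
theorem stmt14 (C : ℝ) (hC : 0 ≤ C) (f : Circle → ℝ)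
    (hA : ∀ x : Circle, f x + f (antipode x) = π * C)
    (hLip : LipschitzCircle f)
    (f' : Circle → ℝ) (hf' : ∀ x : Circle, HasLeftDerivCircleAt f (f' x) x)
    (hTVfin : circleTV f' ≠ ⊤)
    (hTV4C : circleTV f' ≤ ENNReal.ofReal (4 * C)) :
    ∃ ν : Measure Circle, ν Set.univ = ENNReal.ofReal C ∧
      ∀ x : Circle, f x = ∫ y, dS1 x y ∂ν :=
  stmt14_general C hC f hA hLip.continuous f' hf' hTV4C

end CirclePaper
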